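/- If C is an n×n reciprocal pairwise comparison matrix with Koczkodaj inconsistency index KI(C), and κ = 1 − KI(C), then for all indices i, j, k it holds that κ·c_{ik}·c_{kj} ≤ c_{ij} ≤ (1/κ)·c_{ik}·c_{kj}. -/

import Mathlib

open Finset

noncomputable def KI {n : ℕ} (C : Matrix (Fin n) (Fin n) ℝ) : ℝ :=
  ⨆ i : Fin n, ⨆ j : Fin n, ⨆ k : Fin n,
    min |1 - C i j / (C i k * C k j)| |1 - (C i k * C k j) / C i j|

theorem min_triad_le_KI {n : ℕ} (C : Matrix (Fin n) (Fin n) ℝ) (i j k : Fin n) :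
    min |1 - C i j / (C i k * C k j)| |1 - (C i k * C k j) / C i j| ≤ KI C :=
  le_ciSup_of_le (Set.finite_range _).bddAbove i <|
    le_ciSup_of_le (Set.finite_range _).bddAbove j <|
      le_ciSup_of_le (Set.finite_range _).bddAbove k le_rfl

theorem mul_le_and_mul_le_of_abs_one_sub_div_le {x y κ : ℝ} (hy : 0 < y) (hκ : 0 < κ)
    (h : |1 - x / y| ≤ 1 - κ) : κ * y ≤ x ∧ κ * x ≤ y := by
  obtain ⟨hl, hu⟩ := abs_le.mp h
  have hlower : κ * y ≤ x := (le_div_iff₀ hy).mp (by linarith)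
  have hupper : x ≤ (2 - κ) * y := (div_le_iff₀ hy).mp (by linarith)
  refine ⟨hlower, ?_⟩
  calc κ * x ≤ κ * ((2 - κ) * y) := by gcongr
    _ ≤ y := by nlinarith [mul_nonneg hy.le (sq_nonneg (1 - κ))]

theorem triad_bound {n : ℕ} (hn : 2 < n) (C : Matrix (Fin n) (Fin n) ℝ)
    (hpos : ∀ i j, 0 < C i j) (hdiag : ∀ i, C i i = 1)
    (hrec : ∀ i j, C i j * C j i = 1)
    (κ : ℝ) (hκ : κ = 1 - KI C) (hκpos : 0 < κ) :
    ∀ i j k : Fin n, κ * (C i k * C k j) ≤ C i j ∧ C i j ≤ κ⁻¹ * (C i k * C k j) := by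
  intro i j k
  have hx := hpos i j
  have hy := mul_pos (hpos i k) (hpos k j)
  rw [le_inv_mul_iff₀ hκpos]
  have hmin := min_triad_le_KI C i j k
  rw [show KI C = 1 - κ by linarith] at hmin
  rcases min_le_iff.mp hmin with h | h
  · exact mul_le_and_mul_le_of_abs_one_sub_div_le hy hκpos h
  · exact (mul_le_and_mul_le_of_abs_one_sub_div_le hx hκpos h).symm
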